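/- Let Ω be an open subset of ℝⁿ and let f, g, h be H-continuous pairs on Ω. Then (f ⊕ g) ⊗ h = (f ⊗ h) ⊕ (g ⊗ h), where ⊕ (respectively ⊗) denotes the unique H-continuous pair contained in the pointwise interval sum (respectively product) of its two arguments. -/

import Mathlib

open Set



/-- Points of `ℝⁿ`. -/
abbrev Pt (n : ℕ) := EuclideanSpace ℝ (Fin n)

/-- Lower Baire operator `I(D,Ω,f)(x) = sup_{δ>0} inf { f y : y ∈ B_δ(x) ∩ D }`,
where `B_δ(x) = { y ∈ Ω : ‖y - x‖ < δ }`. -/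
noncomputable def Ilow {n : ℕ} (D Om : Set (Pt n)) (f : Pt n → ℝ) (x : Pt n) : ℝ :=
  sSup {a : ℝ | ∃ δ : ℝ, 0 < δ ∧
    a = sInf (f '' {y | y ∈ Om ∧ ‖y - x‖ < δ ∧ y ∈ D})}

/-- Upper Baire operator `S(D,Ω,f)(x) = inf_{δ>0} sup { f y : y ∈ B_δ(x) ∩ D }`. -/
noncomputable def Shigh {n : ℕ} (D Om : Set (Pt n)) (f : Pt n → ℝ) (x : Pt n) : ℝ :=
  sInf {a : ℝ | ∃ δ : ℝ, 0 < δ ∧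
    a = sSup (f '' {y | y ∈ Om ∧ ‖y - x‖ < δ ∧ y ∈ D})}

/-- `f`, defined on `D ⊆ Ω`, is locally bounded relative to `Ω`. -/
def LocBddOn {n : ℕ} (Om D : Set (Pt n)) (f : Pt n → ℝ) : Prop :=
  ∀ x ∈ Om, ∃ δ : ℝ, 0 < δ ∧ ∃ M : ℝ,
    ∀ y, y ∈ Om → ‖y - x‖ < δ → y ∈ D → |f y| < M

/-- `(u, v)` encodes an interval-valued function `x ↦ [u x, v x]` on `Om`. -/
def IntervalPair {n : ℕ} (Om : Set (Pt n)) (u v : Pt n → ℝ) : Prop :=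
  LocBddOn Om Om u ∧ LocBddOn Om Om v ∧ ∀ x ∈ Om, u x ≤ v x

/-- The pair `(u, v)` is S-continuous on `Om`: `I(u) = u` and `S(v) = v`. -/
def SCont {n : ℕ} (Om : Set (Pt n)) (u v : Pt n → ℝ) : Prop :=
  ∀ x ∈ Om, Ilow Om Om u x = u x ∧ Shigh Om Om v x = v x

/-- The pair `(u, v)` is Hausdorff continuous on `Om`. -/
def HCont {n : ℕ} (Om : Set (Pt n)) (u v : Pt n → ℝ) : Prop :=
  ∀ p q : Pt n → ℝ, LocBddOn Om Om p → LocBddOn Om Om q →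
    (∀ x ∈ Om, u x ≤ p x ∧ p x ≤ q x ∧ q x ≤ v x) →
    ∀ x ∈ Om, Ilow Om Om p x = u x ∧ Shigh Om Om q x = v x

/-- `(u, v)` is an H-continuous interval pair on `Om`. -/
def HContPair {n : ℕ} (Om : Set (Pt n)) (u v : Pt n → ℝ) : Prop :=
  IntervalPair Om u v ∧ HCont Om u v

/-- Lower endpoint of the pointwise interval product. -/
noncomputable def imin {n : ℕ} (u₁ v₁ u₂ v₂ : Pt n → ℝ) (x : Pt n) : ℝ :=
  min (min (u₁ x * u₂ x) (u₁ x * v₂ x)) (min (v₁ x * u₂ x) (v₁ x * v₂ x))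

/-- Upper endpoint of the pointwise interval product. -/
noncomputable def imax {n : ℕ} (u₁ v₁ u₂ v₂ : Pt n → ℝ) (x : Pt n) : ℝ :=
  max (max (u₁ x * u₂ x) (u₁ x * v₂ x)) (max (v₁ x * u₂ x) (v₁ x * v₂ x))

/-- `(pl, pu)` is the H-continuous pair contained pointwise in the interval sum of
`(u₁, v₁)` and `(u₂, v₂)`, i.e. `(pl, pu) = (u₁,v₁) ⊕ (u₂,v₂)`. -/
def IsOplus {n : ℕ} (Om : Set (Pt n)) (u₁ v₁ u₂ v₂ pl pu : Pt n → ℝ) : Prop :=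
  HContPair Om pl pu ∧
    ∀ x ∈ Om, u₁ x + u₂ x ≤ pl x ∧ pl x ≤ pu x ∧ pu x ≤ v₁ x + v₂ x

/-- `(ql, qu)` is the H-continuous pair contained pointwise in the interval product of
`(u₁, v₁)` and `(u₂, v₂)`, i.e. `(ql, qu) = (u₁,v₁) ⊗ (u₂,v₂)`. -/
def IsOtimes {n : ℕ} (Om : Set (Pt n)) (u₁ v₁ u₂ v₂ ql qu : Pt n → ℝ) : Prop :=
  HContPair Om ql qu ∧
    ∀ x ∈ Om, imin u₁ v₁ u₂ v₂ x ≤ ql x ∧ ql x ≤ qu x ∧ qu x ≤ imax u₁ v₁ u₂ v₂ x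


def BB {n : ℕ} (Om : Set (Pt n)) (f : Pt n → ℝ) : Prop :=
  ∀ (x : Pt n) (δ : ℝ), ∃ M : ℝ, ∀ y ∈ Om, ‖y - x‖ < δ → |f y| ≤ M

def DenseInOm {n : ℕ} (D Om : Set (Pt n)) : Prop :=
  ∀ x ∈ Om, ∀ δ : ℝ, 0 < δ → ∃ y, y ∈ Om ∧ ‖y - x‖ < δ ∧ y ∈ D

theorem denseSelf {n : ℕ} (Om : Set (Pt n)) : DenseInOm Om Om :=
  fun x hx δ hδ => ⟨x, hx, by simpa using hδ, hx⟩

theorem BB.loc {n : ℕ} {Om : Set (Pt n)} {f : Pt n → ℝ} (h : BB Om f) : LocBddOn Om Om f := by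
  intro x _
  obtain ⟨M, hM⟩ := h x 1
  exact ⟨1, one_pos, M + 1, fun y hy hd _ => by linarith [hM y hy hd]⟩

theorem Ilow_neg {n : ℕ} (D Om : Set (Pt n)) (f : Pt n → ℝ) (x : Pt n) :
    Ilow D Om (fun y => - f y) x = - Shigh D Om f x := by
  unfold Ilow Shigh
  have key : ∀ A : Set (Pt n), sInf ((fun y => - f y) '' A) = - sSup (f '' A) := by
    intro A
    rw [Real.sInf_def]
    congr 2
    ext a
    simp
  rw [Real.sInf_def, neg_neg]
  congr 1
  ext a
  simp only [key, mem_ofPred_eq, mem_neg, neg_eq_iff_eq_neg]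

theorem Shigh_neg {n : ℕ} (D Om : Set (Pt n)) (f : Pt n → ℝ) (x : Pt n) :
    Shigh D Om (fun y => - f y) x = - Ilow D Om f x := by
  have := Ilow_neg D Om (fun y => - f y) x
  simp only [neg_neg] at this
  linarith

theorem LocBddOn.neg' {n : ℕ} {D Om : Set (Pt n)} {f : Pt n → ℝ} (h : LocBddOn Om D f) :
    LocBddOn Om D (fun y => - f y) := by
  simpa [LocBddOn] using h

theorem HContPair.neg' {n : ℕ} {Om : Set (Pt n)} {u v : Pt n → ℝ} (h : HContPair Om u v) :
    HContPair Om (fun y => - v y) (fun y => - u y) := by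
  refine ⟨⟨h.1.2.1.neg', h.1.1.neg', fun x hx => by linarith [h.1.2.2 x hx]⟩, ?_⟩
  intro p q hp hq hpq x hx
  have := h.2 (fun y => - q y) (fun y => - p y) hq.neg' hp.neg' (fun y hy => by
    have := hpq y hy
    refine ⟨by linarith, by linarith, by linarith⟩) x hx
  rw [Ilow_neg, Shigh_neg] at this
  constructor <;> linarith

theorem HContPair.bddAbove {n : ℕ} {Om : Set (Pt n)} {u v : Pt n → ℝ} (h : HContPair Om u v)
    (x : Pt n) (δ : ℝ) : ∃ M : ℝ, ∀ y ∈ Om, ‖y - x‖ < δ → v y ≤ M := by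
  by_contra hc
  push Not at hc
  have hz : ∀ z ∈ Om, v z ≤ 0 := by
    intro z hz
    have h1 := (h.2 u v h.1.1 h.1.2.1 (fun y hy => ⟨le_rfl, h.1.2.2 y hy, le_rfl⟩) z hz).2
    rw [← h1]
    unfold Shigh
    apply csInf_le
    · refine ⟨min (v z) 0, ?_⟩
      rintro a ⟨d, hd, rfl⟩
      by_cases hb : BddAbove (v '' {y | y ∈ Om ∧ ‖y - z‖ < d ∧ y ∈ Om})
      · exact (min_le_left _ _).trans (le_csSup hb ⟨z, ⟨hz, by simpa using hd, hz⟩, rfl⟩)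
      · rw [Real.sSup_of_not_bddAbove hb]; exact min_le_right _ _
    · obtain ⟨w, hw, hwd, _⟩ := hc 0
      have hδ : 0 < δ := lt_of_le_of_lt (norm_nonneg _) hwd
      refine ⟨δ + ‖x - z‖, by positivity, ?_⟩
      rw [Real.sSup_of_not_bddAbove]
      rintro ⟨M, hM⟩
      obtain ⟨y, hy, hyd, hyM⟩ := hc M
      have := hM ⟨y, ⟨hy, ?_, hy⟩, rfl⟩
      · linarith
      · have := norm_sub_le_norm_sub_add_norm_sub y x z
        linarith
  obtain ⟨y, hy, _, h0⟩ := hc 0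
  linarith [hz y hy]

theorem BB.of_le {n : ℕ} {Om : Set (Pt n)} {u v w : Pt n → ℝ} (h : HContPair Om u v)
    (hw : ∀ x ∈ Om, u x ≤ w x ∧ w x ≤ v x) : BB Om w := by
  intro x δ
  obtain ⟨M, hM⟩ := h.bddAbove x δ
  obtain ⟨N, hN⟩ := h.neg'.bddAbove x δ
  refine ⟨max M N, fun y hy hd => abs_le.2 ⟨?_, ?_⟩⟩
  · linarith [hN y hy hd, hw y hy, le_max_right M N]
  · linarith [hM y hy hd, hw y hy, le_max_left M N]

theorem HContPair.BBl {n : ℕ} {Om : Set (Pt n)} {u v : Pt n → ℝ} (h : HContPair Om u v) :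
    BB Om u := BB.of_le h fun x hx => ⟨le_rfl, h.1.2.2 x hx⟩

theorem HContPair.BBu {n : ℕ} {Om : Set (Pt n)} {u v : Pt n → ℝ} (h : HContPair Om u v) :
    BB Om v := BB.of_le h fun x hx => ⟨h.1.2.2 x hx, le_rfl⟩

theorem bdd_img {n : ℕ} {D Om : Set (Pt n)} {f : Pt n → ℝ} (h : BB Om f) (x : Pt n) (δ : ℝ) :
    BddAbove (f '' {y | y ∈ Om ∧ ‖y - x‖ < δ ∧ y ∈ D}) := by
  obtain ⟨M, hM⟩ := h x δ
  refine ⟨M, ?_⟩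
  rintro _ ⟨y, ⟨hy, hd, _⟩, rfl⟩
  exact (abs_le.1 (hM y hy hd)).2

theorem Shigh_lt {n : ℕ} {D Om : Set (Pt n)} {f : Pt n → ℝ} (h : BB Om f) {x : Pt n} {c : ℝ}
    (hc : Shigh D Om f x < c) :
    ∃ δ : ℝ, 0 < δ ∧ ∀ y ∈ Om, ‖y - x‖ < δ → y ∈ D → f y < c := by
  unfold Shigh at hc
  obtain ⟨a, ⟨δ, hδ, rfl⟩, ha⟩ := exists_lt_of_csInf_lt (by exact ⟨_, 1, one_pos, rfl⟩) hc
  exact ⟨δ, hδ, fun y hy hd hD => (le_csSup (bdd_img h x δ) ⟨y, ⟨hy, hd, hD⟩, rfl⟩).trans_lt ha⟩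

theorem Shigh_le {n : ℕ} {D Om : Set (Pt n)} {f : Pt n → ℝ} (h : BB Om f) (hD : DenseInOm D Om)
    {x : Pt n} (hx : x ∈ Om) {c δ : ℝ} (hδ : 0 < δ)
    (hc : ∀ y ∈ Om, ‖y - x‖ < δ → y ∈ D → f y ≤ c) : Shigh D Om f x ≤ c := by
  unfold Shigh
  refine (csInf_le ?_ (by exact ⟨δ, hδ, rfl⟩)).trans (csSup_le ?_ ?_)
  · obtain ⟨M, hM⟩ := h x 1
    refine ⟨-M, ?_⟩
    rintro a ⟨d, hd, rfl⟩
    obtain ⟨y, hy, hyd, hyD⟩ := hD x hx (min d 1) (by positivity)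
    exact (abs_le.1 (hM y hy (hyd.trans_le (min_le_right _ _)))).1.trans
      (le_csSup (bdd_img h x d) ⟨y, ⟨hy, hyd.trans_le (min_le_left _ _), hyD⟩, rfl⟩)
  · obtain ⟨y, hy⟩ := hD x hx δ hδ
    exact ⟨f y, y, hy, rfl⟩
  · rintro _ ⟨y, ⟨hy, hd, hyD⟩, rfl⟩
    exact hc y hy hd hyD

theorem HContPair.usc {n : ℕ} {Om : Set (Pt n)} {u v : Pt n → ℝ} (h : HContPair Om u v)
    {x : Pt n} (hx : x ∈ Om) {c : ℝ} (hc : v x < c) :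
    ∃ δ : ℝ, 0 < δ ∧ ∀ y ∈ Om, ‖y - x‖ < δ → v y < c := by
  have h1 := (h.2 u v h.1.1 h.1.2.1 (fun y hy => ⟨le_rfl, h.1.2.2 y hy, le_rfl⟩) x hx).2
  rw [← h1] at hc
  obtain ⟨δ, hδ, H⟩ := Shigh_lt h.BBu hc
  exact ⟨δ, hδ, fun y hy hd => H y hy hd hy⟩

theorem HContPair.lsc {n : ℕ} {Om : Set (Pt n)} {u v : Pt n → ℝ} (h : HContPair Om u v)
    {x : Pt n} (hx : x ∈ Om) {c : ℝ} (hc : c < u x) :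
    ∃ δ : ℝ, 0 < δ ∧ ∀ y ∈ Om, ‖y - x‖ < δ → c < u y := by
  obtain ⟨δ, hδ, H⟩ := h.neg'.usc hx (neg_lt_neg hc)
  exact ⟨δ, hδ, fun y hy hd => by linarith [H y hy hd]⟩

theorem HContPair.small {n : ℕ} {Om : Set (Pt n)} {u v : Pt n → ℝ} (h : HContPair Om u v)
    {x : Pt n} (hx : x ∈ Om) {r ε : ℝ} (hr : 0 < r) (hε : 0 < ε) :
    ∃ y ∈ Om, ‖y - x‖ < r ∧ v y - u y < ε := by
  classical
  by_contra hc
  push Not at hc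
  let q : Pt n → ℝ := fun y => if ‖y - x‖ < r then v y - ε else v y
  have hq : ∀ y ∈ Om, u y ≤ q y ∧ q y ≤ v y := by
    intro y hy
    simp only [q]
    split_ifs with h1
    · exact ⟨by linarith [hc y hy h1], by linarith⟩
    · exact ⟨h.1.2.2 y hy, le_rfl⟩
  have hBB : BB Om q := BB.of_le h hq
  have h1 := (h.2 u q h.1.1 hBB.loc (fun y hy => ⟨le_rfl, hq y hy⟩) x hx).2
  obtain ⟨δ, hδ, H⟩ := h.usc hx (show v x < v x + ε / 2 by linarith)
  have h2 : Shigh Om Om q x ≤ v x - ε / 2 := by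
    apply Shigh_le hBB (denseSelf Om) hx (lt_min hδ hr)
    intro y hy hd _
    have h3 := H y hy (hd.trans_le (min_le_left _ _))
    simp only [q, if_pos (hd.trans_le (min_le_right _ _))]
    linarith
  linarith

theorem HContPair.upper_eq {n : ℕ} {Om D : Set (Pt n)} {u v : Pt n → ℝ} (h : HContPair Om u v)
    (hD : DenseInOm D Om) {x : Pt n} (hx : x ∈ Om) : Shigh D Om u x = v x := by
  have hq : ∀ y ∈ Om, u y ≤ Shigh D Om u y ∧ Shigh D Om u y ≤ v y := by
    intro y hy
    constructor
    · by_contra hc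
      push Not at hc
      obtain ⟨c, hc1, hc2⟩ := exists_between hc
      obtain ⟨d, hd, H⟩ := Shigh_lt h.BBl hc1
      obtain ⟨e, he, H'⟩ := h.lsc hy hc2
      obtain ⟨z, hz, hzd, hzD⟩ := hD y hy _ (lt_min hd he)
      have h1 := H z hz (hzd.trans_le (min_le_left _ _)) hzD
      have h2 := H' z hz (hzd.trans_le (min_le_right _ _))
      linarith
    · apply le_of_forall_gt_imp_ge_of_dense
      intro c hc
      obtain ⟨e, he, H'⟩ := h.usc hy hc
      exact Shigh_le h.BBl hD hy he fun z hz hd _ => by linarith [H' z hz hd, h.1.2.2 z hz]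
  have hBB : BB Om (Shigh D Om u) := BB.of_le h hq
  apply le_antisymm (hq x hx).2
  rw [← (h.2 u _ h.1.1 hBB.loc (fun y hy => ⟨le_rfl, hq y hy⟩) x hx).2]
  apply le_of_forall_gt_imp_ge_of_dense
  intro c hc
  obtain ⟨d, hd, H⟩ := Shigh_lt h.BBl hc
  refine Shigh_le hBB (denseSelf Om) hx (half_pos hd) fun z hz hzd _ => ?_
  refine Shigh_le h.BBl hD hz (half_pos hd) fun w hw hwd hwD => ?_
  have := norm_sub_le_norm_sub_add_norm_sub w z x
  exact (H w hw (by linarith) hwD).le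

theorem HContPair.upper_unique {n : ℕ} {Om D : Set (Pt n)} {u v u' v' : Pt n → ℝ}
    (h : HContPair Om u v) (h' : HContPair Om u' v')
    (hD : DenseInOm D Om) (he : ∀ y ∈ Om, y ∈ D → u y = u' y) {x : Pt n} (hx : x ∈ Om) :
    v x = v' x := by
  rw [← h.upper_eq hD hx, ← h'.upper_eq hD hx]
  unfold Shigh
  have : ∀ δ : ℝ, u '' {y | y ∈ Om ∧ ‖y - x‖ < δ ∧ y ∈ D} =
      u' '' {y | y ∈ Om ∧ ‖y - x‖ < δ ∧ y ∈ D} := fun δ =>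
    image_congr fun y hy => he y hy.1 hy.2.2
  simp only [this]

def Wset {n : ℕ} (Om : Set (Pt n)) (u v : Pt n → ℝ) (k : ℕ) : Set (Pt n) :=
  {x | x ∈ Om ∧ v x - u x < 1 / ((k : ℝ) + 1)} ∪ (closure Om)ᶜ

theorem Wopen {n : ℕ} {Om : Set (Pt n)} (hOm : IsOpen Om) {u v : Pt n → ℝ}
    (h : HContPair Om u v) (k : ℕ) : IsOpen (Wset Om u v k) := by
  refine IsOpen.union ?_ isClosed_closure.isOpen_compl
  rw [Metric.isOpen_iff]
  rintro x ⟨hx, hk⟩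
  obtain ⟨r, hr, hr'⟩ := Metric.isOpen_iff.1 hOm x hx
  set e := (1 / ((k : ℝ) + 1) - (v x - u x)) / 2 with he
  have he0 : 0 < e := by rw [he]; linarith
  obtain ⟨d, hd, H⟩ := h.usc hx (show v x < v x + e by linarith)
  obtain ⟨d', hd', H'⟩ := h.lsc hx (show u x - e < u x by linarith)
  refine ⟨min r (min d d'), by positivity, fun y hy => ?_⟩
  rw [mem_ball_iff_norm, lt_min_iff, lt_min_iff] at hy
  have hyO : y ∈ Om := hr' (mem_ball_iff_norm.2 hy.1)
  refine ⟨hyO, ?_⟩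
  linarith [H y hyO hy.2.1, H' y hyO hy.2.2]

theorem Wdense {n : ℕ} {Om : Set (Pt n)} {u v : Pt n → ℝ}
    (h : HContPair Om u v) (k : ℕ) : Dense (Wset Om u v k) := by
  rw [Metric.dense_iff]
  intro x r hr
  by_cases hx : x ∈ closure Om
  · obtain ⟨y, hy, hxy⟩ := Metric.mem_closure_iff.1 hx (r / 2) (half_pos hr)
    obtain ⟨z, hz, hzy, hs⟩ := h.small hy (half_pos hr)
      (show 0 < 1 / ((k : ℝ) + 1) by positivity)
    refine ⟨z, ?_, Or.inl ⟨hz, hs⟩⟩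
    rw [Metric.mem_ball]
    rw [← dist_eq_norm] at hzy
    rw [dist_comm] at hxy
    linarith [dist_triangle z y x]
  · exact ⟨x, Metric.mem_ball_self hr, Or.inr hx⟩

theorem eq_of_W {n : ℕ} {Om : Set (Pt n)} {u v : Pt n → ℝ}
    (h : HContPair Om u v) {x : Pt n} (hx : x ∈ Om) (hW : ∀ k, x ∈ Wset Om u v k) :
    v x = u x := by
  apply le_antisymm _ (h.1.2.2 x hx)
  by_contra hc
  push Not at hc
  obtain ⟨k, hk⟩ := exists_nat_one_div_lt (sub_pos.2 hc)
  rcases hW k with h1 | h1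
  · linarith [h1.2]
  · exact h1 (subset_closure hx)

theorem common_dense {n : ℕ} {Om : Set (Pt n)} (hOm : IsOpen Om)
    {u₁ v₁ u₂ v₂ u₃ v₃ : Pt n → ℝ}
    (h₁ : HContPair Om u₁ v₁) (h₂ : HContPair Om u₂ v₂) (h₃ : HContPair Om u₃ v₃) :
    DenseInOm {x | v₁ x = u₁ x ∧ v₂ x = u₂ x ∧ v₃ x = u₃ x} Om := by
  have d1 : ∀ {u v : Pt n → ℝ}, HContPair Om u v →
      IsGδ (⋂ k, Wset Om u v k) ∧ Dense (⋂ k, Wset Om u v k) := fun h =>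
    ⟨IsGδ.iInter_of_isOpen (Wopen hOm h), dense_iInter_of_isOpen_nat (Wopen hOm h) (Wdense h)⟩
  have hd := ((d1 h₁).2.inter_of_Gδ (d1 h₁).1 (d1 h₂).1 (d1 h₂).2).inter_of_Gδ
    ((d1 h₁).1.inter (d1 h₂).1) (d1 h₃).1 (d1 h₃).2
  intro x hx δ hδ
  obtain ⟨r, hr, hr'⟩ := Metric.isOpen_iff.1 hOm x hx
  obtain ⟨y, hy, hyW⟩ := Metric.dense_iff.1 hd x (min r δ) (lt_min hr hδ)
  rw [mem_ball_iff_norm, lt_min_iff] at hy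
  have hyO : y ∈ Om := hr' (mem_ball_iff_norm.2 hy.1)
  exact ⟨y, hyO, hy.2, eq_of_W h₁ hyO (mem_iInter.1 hyW.1.1),
    eq_of_W h₂ hyO (mem_iInter.1 hyW.1.2), eq_of_W h₃ hyO (mem_iInter.1 hyW.2)⟩

theorem stmt14 {n : ℕ} (Om : Set (Pt n)) (hOm : IsOpen Om)
    (u₁ v₁ u₂ v₂ u₃ v₃ : Pt n → ℝ)
    (h₁ : HContPair Om u₁ v₁) (h₂ : HContPair Om u₂ v₂) (h₃ : HContPair Om u₃ v₃)
    (sl su pl pu ql qu al au bl bu : Pt n → ℝ)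
    (hfg : IsOplus Om u₁ v₁ u₂ v₂ sl su)
    (hL : IsOtimes Om sl su u₃ v₃ al au)
    (hfh : IsOtimes Om u₁ v₁ u₃ v₃ pl pu)
    (hgh : IsOtimes Om u₂ v₂ u₃ v₃ ql qu)
    (hR : IsOplus Om pl pu ql qu bl bu) :
    ∀ x ∈ Om, al x = bl x ∧ au x = bu x := by
  have hD := common_dense hOm h₁ h₂ h₃
  have key : ∀ y ∈ Om, y ∈ {x | v₁ x = u₁ x ∧ v₂ x = u₂ x ∧ v₃ x = u₃ x} →
      al y = bl y ∧ au y = bu y := by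
    rintro y hy ⟨e1, e2, e3⟩
    obtain ⟨s1, s2, s3⟩ := hfg.2 y hy
    obtain ⟨a1, a2, a3⟩ := hL.2 y hy
    obtain ⟨p1, p2, p3⟩ := hfh.2 y hy
    obtain ⟨q1, q2, q3⟩ := hgh.2 y hy
    obtain ⟨b1, b2, b3⟩ := hR.2 y hy
    have hsl : sl y = u₁ y + u₂ y := by linarith
    have hsu : su y = u₁ y + u₂ y := by linarith
    simp only [imin, imax, e1, e2, e3, hsl, hsu, min_self, max_self] at a1 a3 p1 p3 q1 q3
    rw [add_mul] at a1 a3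
    constructor <;> linarith
  intro x hx
  refine ⟨?_, hL.1.upper_unique hR.1 hD (fun y hy hyD => (key y hy hyD).1) hx⟩
  have := hL.1.neg'.upper_unique hR.1.neg' hD
    (fun y hy hyD => by simp only [(key y hy hyD).2]) hx
  linarith
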